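/- arXiv:1211.0414 — 2 statements merged into one kernel-verified Lean document; each statement's English description precedes it below -/
import Mathlib

section
/- Let (H,d) be a Hadamard space and y ∈ H. For every ε > 0 there exists δ > 0 such that for every bounded sequence (x_n) ⊂ H that weakly converges to a point x ∈ H and satisfies d(y,x_n) ≤ 1 for all n and limsup_{m,n→∞} d(x_m,x_n) > ε, one has d(x,y) ≤ 1 − δ. -/
open Filter Topology
open scoped Classical

/-- `γ`, restricted to `[0,1]`, is an affinely parametrized geodesic. -/
def IsGeodesic {H : Type*} [MetricSpace H] (γ : ℝ → H) : Prop :=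
  ∀ s ∈ Set.Icc (0:ℝ) 1, ∀ t ∈ Set.Icc (0:ℝ) 1,
    dist (γ s) (γ t) = |s - t| * dist (γ 0) (γ 1)

/-- A Hadamard space: a complete geodesic metric space satisfying the CAT(0) inequality. -/
structure HadamardSpace (H : Type*) [MetricSpace H] [CompleteSpace H] : Prop where
  geodesic : ∀ x y : H, ∃ γ : ℝ → H, IsGeodesic γ ∧ γ 0 = x ∧ γ 1 = y
  cat0 : ∀ (x : H) (γ : ℝ → H), IsGeodesic γ → ∀ t ∈ Set.Icc (0:ℝ) 1,
      dist x (γ t) ^ 2 ≤ (1 - t) * dist x (γ 0) ^ 2 + t * dist x (γ 1) ^ 2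
        - t * (1 - t) * dist (γ 0) (γ 1) ^ 2

/-- A set is (geodesically) convex if it contains every geodesic segment between its points. -/
def GeodesicConvex {H : Type*} [MetricSpace H] (C : Set H) : Prop :=
  ∀ γ : ℝ → H, IsGeodesic γ → γ 0 ∈ C → γ 1 ∈ C → ∀ t ∈ Set.Icc (0:ℝ) 1, γ t ∈ C

/-- A function `f : H → (−∞,∞]` is convex if it is convex along every geodesic. -/
def ConvexFun {H : Type*} [MetricSpace H] (f : H → EReal) : Prop :=
  ∀ γ : ℝ → H, IsGeodesic γ → ∀ t ∈ Set.Icc (0:ℝ) 1,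
    f (γ t) ≤ ((1 - t : ℝ) : EReal) * f (γ 0) + ((t : ℝ) : EReal) * f (γ 1)

/-- `f` is strongly convex with parameter `β > 0`. -/
def StronglyConvexWith {H : Type*} [MetricSpace H] (β : ℝ) (f : H → EReal) : Prop :=
  ∀ γ : ℝ → H, IsGeodesic γ → ∀ t ∈ Set.Icc (0:ℝ) 1,
    f (γ t) ≤ ((1 - t : ℝ) : EReal) * f (γ 0) + ((t : ℝ) : EReal) * f (γ 1)
      - ((β * (t * (1 - t)) * dist (γ 0) (γ 1) ^ 2 : ℝ) : EReal)

/-- `f : H → (−∞,∞]` is proper (not identically `∞`, never `−∞`), convex and lsc. -/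
def ProperConvexLsc {H : Type*} [MetricSpace H] (f : H → EReal) : Prop :=
  (∃ x, f x ≠ ⊤) ∧ (∀ x, f x ≠ ⊥) ∧ ConvexFun f ∧ LowerSemicontinuous f

/-- `c` is an asymptotic center of the (bounded) sequence `x`:
it minimizes `y ↦ limsup_n d(y, x_n)²`. -/
def IsAsymptoticCenter {H : Type*} [MetricSpace H] (x : ℕ → H) (c : H) : Prop :=
  ∀ y : H, limsup (fun n => dist c (x n) ^ 2) atTop ≤ limsup (fun n => dist y (x n) ^ 2) atTop

/-- `x` weakly converges to `c` if `c` is the asymptotic center of every subsequence of `x`. -/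
def WeakConvSeq {H : Type*} [MetricSpace H] (x : ℕ → H) (c : H) : Prop :=
  ∀ φ : ℕ → ℕ, StrictMono φ → IsAsymptoticCenter (x ∘ φ) c

/-- Mosco convergence of `fn` to `f`. -/
def MoscoConv {H : Type*} [MetricSpace H] (fn : ℕ → H → EReal) (f : H → EReal) : Prop :=
  (∀ (x : H) (xs : ℕ → H), Bornology.IsBounded (Set.range xs) → WeakConvSeq xs x →
      f x ≤ liminf (fun n => fn n (xs n)) atTop) ∧
  (∀ x : H, ∃ ys : ℕ → H, Tendsto ys atTop (𝓝 x) ∧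
      Tendsto (fun n => fn n (ys n)) atTop (𝓝 (f x)))

/-- `p` is the resolvent `J_λ x` of `f` at `x`: it minimizes `y ↦ f(y) + d(x,y)²/(2λ)`. -/
def IsResolventPt {H : Type*} [MetricSpace H] (f : H → EReal) (lam : ℝ) (x p : H) : Prop :=
  ∀ y : H, f p + ((dist x p ^ 2 / (2 * lam) : ℝ) : EReal)
    ≤ f y + ((dist x y ^ 2 / (2 * lam) : ℝ) : EReal)

/-- The Moreau–Yosida envelope `f_λ(x) = inf_y [f(y) + d(x,y)²/(2λ)]`. -/
noncomputable def MoreauEnv {H : Type*} [MetricSpace H] (f : H → EReal) (lam : ℝ) (x : H) :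
    EReal :=
  ⨅ y : H, f y + ((dist x y ^ 2 / (2 * lam) : ℝ) : EReal)

/-- `p` is the metric projection of `x` onto `C`. -/
def IsProjPt {H : Type*} [MetricSpace H] (C : Set H) (x p : H) : Prop :=
  p ∈ C ∧ ∀ c ∈ C, dist x p ≤ dist x c

/-- The indicator function of a set, with values in `(−∞,∞]`. -/
noncomputable def indicatorE {H : Type*} (C : Set H) : H → EReal :=
  fun x => if x ∈ C then (0 : EReal) else ⊤

/-- `y = S_t x` is the gradient-flow semigroup value:
the limit of the iterated resolvents `(J_{t/n})^{(n)} x`. -/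
def IsGradientFlowPt {H : Type*} [MetricSpace H] (J : ℝ → H → H) (t : ℝ) (x y : H) : Prop :=
  Tendsto (fun n : ℕ => (J (t / (n : ℝ)))^[n] x) atTop (𝓝 y)

/-!
The functional `ω z = limsup d(z, xₙ)²` inherits the strong convexity of the squared distances.
Comparing its minimizer `c` with the points near `c` on the segment from `c` to `y` gives the
Opial-type inequality `ω c + d(c, y)² ≤ ω y`. The triangle inequality through `c` gives
`limsup d(xₘ, xₙ) ≤ 2 √(ω c)`, so a sequence far from being Cauchy has a large `ω c`,
and `d(c, y)² ≤ ω y - ω c` is bounded away from `1` as soon as `ω y ≤ 1`.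
-/

/-- A CAT(0) space: a geodesic metric space satisfying the CAT(0) inequality. It differs from
`HadamardSpace` only in not being required to be complete. -/
structure CAT0Space (H : Type*) [MetricSpace H] : Prop where
  geodesic : ∀ x y : H, ∃ γ : ℝ → H, IsGeodesic γ ∧ γ 0 = x ∧ γ 1 = y
  cat0 : ∀ (x : H) (γ : ℝ → H), IsGeodesic γ → ∀ t ∈ Set.Icc (0 : ℝ) 1,
    dist x (γ t) ^ 2 ≤ (1 - t) * dist x (γ 0) ^ 2 + t * dist x (γ 1) ^ 2
      - t * (1 - t) * dist (γ 0) (γ 1) ^ 2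

lemma HadamardSpace.cat0Space {H : Type*} [MetricSpace H] [CompleteSpace H]
    (hH : HadamardSpace H) : CAT0Space H :=
  ⟨hH.geodesic, hH.cat0⟩

lemma limsup_nonneg_of_nonneg {ι : Type*} {l : Filter ι} [l.NeBot] {u : ι → ℝ}
    (hu : IsBoundedUnder (· ≤ ·) l u) (h : ∀ i, 0 ≤ u i) : 0 ≤ limsup u l :=
  le_limsup_of_frequently_le (.of_forall h) hu

section AsymptoticDistance

variable {ι H : Type*} [PseudoMetricSpace H] {l : Filter ι} {x : ι → H}

lemma isBoundedUnder_le_dist_sq (hx : Bornology.IsBounded (Set.range x)) (z : H) :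
    IsBoundedUnder (· ≤ ·) l fun i => dist z (x i) ^ 2 := by
  obtain ⟨R, hR⟩ := hx.subset_closedBall z
  refine isBoundedUnder_of ⟨R ^ 2, fun i => ?_⟩
  have hi : dist z (x i) ≤ R := Metric.mem_closedBall'.1 (hR ⟨i, rfl⟩)
  gcongr

lemma limsup_dist_sq_le [l.NeBot] {z : H} {b : ℝ} (h : ∀ᶠ i in l, dist z (x i) ^ 2 ≤ b) :
    limsup (fun i => dist z (x i) ^ 2) l ≤ b :=
  limsup_le_of_le (isCoboundedUnder_le_of_le l fun _ => sq_nonneg _) h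

lemma limsup_dist_prod_le_two_mul_sqrt [l.NeBot] (hx : Bornology.IsBounded (Set.range x)) (c : H) :
    limsup (fun p : ι × ι => dist (x p.1) (x p.2)) (l ×ˢ l) ≤
      2 * √(limsup (fun i => dist c (x i) ^ 2) l) := by
  rw [← div_le_iff₀' two_pos]
  refine le_of_forall_gt_imp_ge_of_dense fun ρ hρ => ?_
  have hρ₀ : 0 < ρ := (Real.sqrt_nonneg _).trans_lt hρ
  have hnear : ∀ᶠ i in l, dist c (x i) < ρ :=
    (eventually_lt_of_limsup_lt ((Real.sqrt_lt' hρ₀).1 hρ) (isBoundedUnder_le_dist_sq hx c)).mono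
      fun i hi => lt_of_pow_lt_pow_left₀ 2 hρ₀.le hi
  rw [div_le_iff₀' two_pos]
  refine limsup_le_of_le (isCoboundedUnder_le_of_le _ fun _ => dist_nonneg) ?_
  filter_upwards [hnear.prod_mk hnear] with p ⟨hp₁, hp₂⟩
  linarith [dist_triangle_left (x p.1) (x p.2) c]

lemma sq_half_limsup_dist_prod_le [l.NeBot] (hx : Bornology.IsBounded (Set.range x)) (c : H) :
    (limsup (fun p : ι × ι => dist (x p.1) (x p.2)) (l ×ˢ l) / 2) ^ 2 ≤
      limsup (fun i => dist c (x i) ^ 2) l := by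
  obtain ⟨C, hC⟩ := Metric.isBounded_range_iff.1 hx
  have hdiam : 0 ≤ limsup (fun p : ι × ι => dist (x p.1) (x p.2)) (l ×ˢ l) :=
    limsup_nonneg_of_nonneg (isBoundedUnder_of ⟨C, fun p => hC p.1 p.2⟩) fun _ => dist_nonneg
  have hrad : 0 ≤ limsup (fun i => dist c (x i) ^ 2) l :=
    limsup_nonneg_of_nonneg (isBoundedUnder_le_dist_sq hx c) fun _ => sq_nonneg _
  rw [← Real.le_sqrt (div_nonneg hdiam zero_le_two) hrad, div_le_iff₀' two_pos]
  exact limsup_dist_prod_le_two_mul_sqrt hx c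

end AsymptoticDistance

section CAT0

variable {H : Type*} [MetricSpace H]

lemma CAT0Space.exists_forall_dist_sq_le (hH : CAT0Space H) (a b : H) {t : ℝ}
    (ht : t ∈ Set.Icc (0 : ℝ) 1) :
    ∃ z : H, ∀ p : H, dist z p ^ 2 ≤
      (1 - t) * dist a p ^ 2 + t * dist b p ^ 2 - t * (1 - t) * dist a b ^ 2 := by
  obtain ⟨γ, hγ, rfl, rfl⟩ := hH.geodesic a b
  exact ⟨γ t, fun p => by simpa only [dist_comm p] using hH.cat0 p γ hγ t ht⟩

lemma CAT0Space.exists_limsup_dist_sq_le {ι : Type*} {l : Filter ι} [l.NeBot] {x : ι → H}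
    (hH : CAT0Space H) (hx : Bornology.IsBounded (Set.range x)) (a b : H) {t : ℝ}
    (ht : t ∈ Set.Icc (0 : ℝ) 1) :
    ∃ z : H, limsup (fun i => dist z (x i) ^ 2) l ≤
      (1 - t) * limsup (fun i => dist a (x i) ^ 2) l + t * limsup (fun i => dist b (x i) ^ 2) l
        - t * (1 - t) * dist a b ^ 2 := by
  obtain ⟨z, hz⟩ := hH.exists_forall_dist_sq_le a b ht
  refine ⟨z, le_of_forall_pos_le_add fun η hη => limsup_dist_sq_le ?_⟩
  have eventually_lt (w : H) :
      ∀ᶠ i in l, dist w (x i) ^ 2 < limsup (fun i => dist w (x i) ^ 2) l + η :=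
    eventually_lt_of_limsup_lt (lt_add_of_pos_right _ hη) (isBoundedUnder_le_dist_sq hx w)
  filter_upwards [eventually_lt a, eventually_lt b] with i ha hb
  linarith [hz (x i), mul_le_mul_of_nonneg_left ha.le (sub_nonneg.2 ht.2),
    mul_le_mul_of_nonneg_left hb.le ht.1]

lemma IsAsymptoticCenter.limsup_dist_sq_add_dist_sq_le (hH : CAT0Space H) {x : ℕ → H} {c : H}
    (hc : IsAsymptoticCenter x c) (hx : Bornology.IsBounded (Set.range x)) (y : H) :
    limsup (fun n => dist c (x n) ^ 2) atTop + dist c y ^ 2 ≤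
      limsup (fun n => dist y (x n) ^ 2) atTop := by
  set ω : H → ℝ := fun z => limsup (fun n => dist z (x n) ^ 2) atTop
  have along_segment : ∀ t ∈ Set.Ioo (0 : ℝ) 1, ω c + (1 - t) * dist c y ^ 2 ≤ ω y := by
    intro t ht
    obtain ⟨z, hz⟩ :=
      hH.exists_limsup_dist_sq_le (l := atTop) hx c y (Set.Ioo_subset_Icc_self ht)
    have hmin : ω c ≤ (1 - t) * ω c + t * ω y - t * (1 - t) * dist c y ^ 2 := (hc z).trans hz
    refine le_of_mul_le_mul_left ?_ ht.1
    linarith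
  have hlim : Tendsto (fun t : ℝ => ω c + (1 - t) * dist c y ^ 2) (𝓝[>] 0)
      (𝓝 (ω c + dist c y ^ 2)) := by
    have hcont : Continuous fun t : ℝ => ω c + (1 - t) * dist c y ^ 2 := by fun_prop
    simpa using (hcont.tendsto 0).mono_left nhdsWithin_le_nhds
  refine le_of_tendsto hlim ?_
  filter_upwards [Ioo_mem_nhdsGT zero_lt_one] with t ht using along_segment t ht

theorem hadamard_kadec_klee_general (hH : CAT0Space H) {x : ℕ → H} {c y : H} {r : ℝ}
    (hc : IsAsymptoticCenter x c) (hy : ∀ n, dist y (x n) ≤ r) :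
    dist c y ^ 2 + (limsup (fun p : ℕ × ℕ => dist (x p.1) (x p.2)) atTop / 2) ^ 2 ≤ r ^ 2 := by
  have hx : Bornology.IsBounded (Set.range x) :=
    Metric.isBounded_closedBall.subset
      (Set.range_subset_iff.2 fun n => Metric.mem_closedBall'.2 (hy n))
  set ω : H → ℝ := fun z => limsup (fun n => dist z (x n) ^ 2) atTop
  have hsep : (limsup (fun p : ℕ × ℕ => dist (x p.1) (x p.2)) atTop / 2) ^ 2 ≤ ω c := by
    simpa only [prod_atTop_atTop_eq] using sq_half_limsup_dist_prod_le (l := atTop) hx c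
  have hOpial : ω c + dist c y ^ 2 ≤ ω y := hc.limsup_dist_sq_add_dist_sq_le hH hx y
  have hball : ω y ≤ r ^ 2 :=
    limsup_dist_sq_le (.of_forall fun n => pow_le_pow_left₀ dist_nonneg (hy n) 2)
  linarith

end CAT0

/-- A quantified Kadec–Klee-type property of Hadamard spaces. -/
theorem hadamard_kadec_klee
    {H : Type*} [MetricSpace H] [CompleteSpace H] (hH : HadamardSpace H)
    (y : H) (ε : ℝ) (hε : 0 < ε) :
    ∃ δ > (0:ℝ), ∀ (x : ℕ → H) (c : H),
      Bornology.IsBounded (Set.range x) → WeakConvSeq x c →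
      (∀ n, dist y (x n) ≤ 1) →
      ε < limsup (fun p : ℕ × ℕ => dist (x p.1) (x p.2)) atTop →
      dist c y ≤ 1 - δ := by
  refine ⟨ε ^ 2 / 8, by positivity, fun x c _ hc hy hsep => ?_⟩
  linarith [hadamard_kadec_klee_general (x := x) hH.cat0Space (hc id strictMono_id) hy,
    pow_lt_pow_left₀ hsep hε.le two_ne_zero, sq_nonneg (dist c y - 1)]
end

section
/- Let (H,d) be a Hadamard space and f : H → (−∞,∞] a proper convex lower semicontinuous function that attains its minimum on H. Let x₀ ∈ H be arbitrary and let (λ_n) be a sequence of positive reals with Σ_{n=1}^∞ λ_n = ∞. Then the proximal point algorithm sequence defined by x_n = argmin_{y∈H} [f(y) + d(y,x_{n−1})²/(2λ_n)] weakly converges to a minimizer of f. -/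
open Filter Topology
open scoped Classical

/-! Testing the resolvent inequality at a point `y` with `f y ≤ v` gives
`2 λₙ (f xₙ₊₁ - v) + d(y, xₙ₊₁)² ≤ d(y, xₙ)²`. For `v = min f` it shows that `x` is Fejér monotone
with respect to the minimizers, and, summed over `n`, the divergence of `∑ λₙ` forces
`f xₙ → inf f`. An asymptotic center `c` of a subsequence satisfies `f c ≤ limsup f xₙ`, because
otherwise projecting `c` onto a sublevel set of `f` would strictly decrease the limsup of the
squared distances that `c` minimizes; hence `c` minimizes `f`. By Fejér monotonicity this limsup, at
a minimizer of `f`, is the same along every subsequence, so the asymptotic center of the whole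
sequence is also that of each subsequence.

Projections, resolvents and asymptotic centers all minimize strongly convex functions; the
projection and resolvent inequalities express the quadratic growth of such a function away from
its minimum. -/

section Geodesic

/-- A geodesic metric space: any two points are joined by an affinely parametrized geodesic. This
is the part of `HadamardSpace` on which minimization of strongly convex functions rests. -/
def IsGeodesicSpace (H : Type*) [MetricSpace H] : Prop :=
  ∀ x y : H, ∃ γ : ℝ → H, IsGeodesic γ ∧ γ 0 = x ∧ γ 1 = y

variable {H : Type*} [MetricSpace H]

lemma ConvexFun.geodesicConvex_sublevel {f : H → EReal} (hf : ConvexFun f) (a : ℝ) :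
    GeodesicConvex {y | f y ≤ a} := by
  intro γ hγ h0 h1 t ht
  calc f (γ t) ≤ ((1 - t : ℝ) : EReal) * f (γ 0) + ((t : ℝ) : EReal) * f (γ 1) := hf γ hγ t ht
    _ ≤ ((1 - t : ℝ) : EReal) * a + ((t : ℝ) : EReal) * a :=
      add_le_add
        (mul_le_mul_of_nonneg_left h0 (EReal.coe_nonneg.2 (sub_nonneg.2 ht.2)))
        (mul_le_mul_of_nonneg_left h1 (EReal.coe_nonneg.2 ht.1))
    _ = a := by norm_cast; ring

lemma stronglyConvexWith_coe_iff {β : ℝ} {g : H → ℝ} :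
    StronglyConvexWith β (fun y => (g y : EReal)) ↔
      ∀ γ : ℝ → H, IsGeodesic γ → ∀ t ∈ Set.Icc (0 : ℝ) 1,
        g (γ t) ≤ (1 - t) * g (γ 0) + t * g (γ 1) - β * (t * (1 - t)) * dist (γ 0) (γ 1) ^ 2 := by
  simp only [StronglyConvexWith]
  norm_cast

lemma StronglyConvexWith.const_mul {β c : ℝ} (hc : 0 ≤ c) {g : H → ℝ}
    (hg : StronglyConvexWith β (fun y => (g y : EReal))) :
    StronglyConvexWith (c * β) (fun y => ((c * g y : ℝ) : EReal)) := by
  rw [stronglyConvexWith_coe_iff] at hg ⊢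
  intro γ hγ t ht
  linarith [mul_le_mul_of_nonneg_left (hg γ hγ t ht) hc]

lemma ConvexFun.add_stronglyConvexWith {f : H → EReal} (hf : ConvexFun f) {β : ℝ} {g : H → ℝ}
    (hg : StronglyConvexWith β (fun y => (g y : EReal))) :
    StronglyConvexWith β (fun y => f y + g y) := by
  intro γ hγ t ht
  have distrib (s : ℝ) (hs : 0 ≤ s) (y : H) : (s : EReal) * (f y + g y) = s * f y + s * g y :=
    EReal.left_distrib_of_nonneg_of_ne_top (EReal.coe_nonneg.2 hs) (EReal.coe_ne_top s) _ _
  rw [distrib _ (sub_nonneg.2 ht.2), distrib _ ht.1, add_add_add_comm, add_sub_assoc]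
  exact add_le_add (hf γ hγ t ht) (hg γ hγ t ht)

lemma StronglyConvexWith.add_dist_sq_le_of_isMinOn (hgeo : IsGeodesicSpace H) {β : ℝ}
    {F : H → EReal} (hF : StronglyConvexWith β F) {C : Set H} (hC : GeodesicConvex C) {p y : H}
    (hp : p ∈ C) (hmin : IsMinOn F C p) (hy : y ∈ C) :
    F p + ((β * dist p y ^ 2 : ℝ) : EReal) ≤ F y := by
  rcases eq_or_ne (F p) ⊥ with hbot | hbot
  · simp [hbot]
  rcases eq_or_ne (F y) ⊤ with htop | htop
  · simp [htop]
  have hpy : F p ≤ F y := hmin hy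
  lift F p to ℝ using ⟨ne_top_of_le_ne_top htop hpy, hbot⟩ with a ha
  lift F y to ℝ using ⟨htop, ne_bot_of_le_ne_bot (EReal.coe_ne_bot a) hpy⟩ with b hb
  obtain ⟨γ, hγ, rfl, rfl⟩ := hgeo p y
  have hslope : ∀ t ∈ Set.Ioo (0 : ℝ) 1, (1 - t) * (β * dist (γ 0) (γ 1) ^ 2) ≤ b - a := by
    intro t ht
    have ht' : t ∈ Set.Icc (0 : ℝ) 1 := Set.Ioo_subset_Icc_self ht
    have h := (hmin (hC γ hγ hp hy t ht')).out.trans (hF γ hγ t ht')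
    rw [← ha, ← hb] at h
    norm_cast at h
    refine le_of_mul_le_mul_left ?_ ht.1
    linarith
  have hlim : Tendsto (fun t : ℝ => (1 - t) * (β * dist (γ 0) (γ 1) ^ 2)) (𝓝[>] 0)
      (𝓝 (β * dist (γ 0) (γ 1) ^ 2)) :=
    Tendsto.mono_left (Continuous.tendsto' (by fun_prop) _ _ (by simp)) nhdsWithin_le_nhds
  have hgrowth : β * dist (γ 0) (γ 1) ^ 2 ≤ b - a :=
    le_of_tendsto hlim (eventually_of_mem (Ioo_mem_nhdsGT one_pos) hslope)
  norm_cast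
  linarith

lemma StronglyConvexWith.coe_add_dist_sq_le_of_isMinOn (hgeo : IsGeodesicSpace H) {β : ℝ}
    {g : H → ℝ} (hg : StronglyConvexWith β (fun y => (g y : EReal))) {C : Set H}
    (hC : GeodesicConvex C) {p y : H} (hp : p ∈ C) (hmin : IsMinOn g C p) (hy : y ∈ C) :
    g p + β * dist p y ^ 2 ≤ g y :=
  mod_cast hg.add_dist_sq_le_of_isMinOn hgeo hC hp
    (hmin.comp_mono (g := Real.toEReal) EReal.coe_strictMono.monotone) hy

lemma StronglyConvexWith.cauchySeq_of_tendsto_lowerBound (hgeo : IsGeodesicSpace H) {β : ℝ}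
    (hβ : 0 < β) {g : H → ℝ} (hg : StronglyConvexWith β (fun y => (g y : EReal))) {C : Set H}
    (hC : GeodesicConvex C) {l : ℝ} (hl : ∀ y ∈ C, l ≤ g y) {u : ℕ → H} (huC : ∀ n, u n ∈ C)
    (hu : Tendsto (fun n => g (u n)) atTop (𝓝 l)) : CauchySeq u := by
  refine Metric.cauchySeq_iff.2 fun ε hε => ?_
  obtain ⟨N, hN⟩ := eventually_atTop.1
    (hu.eventually_lt_const (lt_add_of_pos_right l (by positivity : 0 < β * ε ^ 2 / 4)))
  refine ⟨N, fun m hm n hn => lt_of_pow_lt_pow_left₀ 2 hε.le ?_⟩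
  obtain ⟨γ, hγ, h0, h1⟩ := hgeo (u m) (u n)
  have hhalf : (1 / 2 : ℝ) ∈ Set.Icc (0 : ℝ) 1 := by norm_num
  have hmid := stronglyConvexWith_coe_iff.1 hg γ hγ _ hhalf
  have hlow := hl _ (hC γ hγ (h0 ▸ huC m) (h1 ▸ huC n) _ hhalf)
  rw [h0, h1] at hmid
  refine lt_of_mul_lt_mul_left ?_ hβ.le
  linarith [hN m hm, hN n hn]

lemma StronglyConvexWith.exists_isMinOn [CompleteSpace H] (hgeo : IsGeodesicSpace H) {β : ℝ}
    (hβ : 0 < β) {g : H → ℝ} (hg : StronglyConvexWith β (fun y => (g y : EReal))) {C : Set H}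
    (hC : GeodesicConvex C) (hclosed : IsClosed C) (hne : C.Nonempty)
    (hlsc : LowerSemicontinuousOn g C) (hbdd : BddBelow (g '' C)) : ∃ c ∈ C, IsMinOn g C c := by
  have hinf : ∀ y ∈ C, sInf (g '' C) ≤ g y := fun y hy => csInf_le hbdd ⟨y, hy, rfl⟩
  obtain ⟨_, -, hlim, hmem⟩ := exists_seq_tendsto_sInf (hne.image g) hbdd
  choose u huC hu using hmem
  simp only [← funext hu] at hlim
  obtain ⟨c, hc⟩ := cauchySeq_tendsto_of_complete
    (hg.cauchySeq_of_tendsto_lowerBound hgeo hβ hC hinf huC hlim)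
  have hcC : c ∈ C := hclosed.mem_of_tendsto hc (.of_forall huC)
  have hc' : Tendsto u atTop (𝓝[C] c) := tendsto_nhdsWithin_iff.2 ⟨hc, .of_forall huC⟩
  have hgc : g c ≤ sInf (g '' C) := le_of_forall_lt_imp_le_of_dense fun a ha =>
    ge_of_tendsto hlim ((hc'.eventually (hlsc c hcC a ha)).mono fun _ hn => hn.le)
  exact ⟨c, hcC, fun y hy => hgc.trans (hinf y hy)⟩

end Geodesic

section AsymptoticCenter

variable {H : Type*} [MetricSpace H]

/-- The function `ω(y) = limsup d(y, uₙ)²` whose minimizers are the asymptotic centers of `u`. The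
limsup is taken in `ℝ`, so the value is meaningful for bounded sequences only. -/
noncomputable def limsupDistSq (u : ℕ → H) (y : H) : ℝ :=
  limsup (fun n => dist y (u n) ^ 2) atTop

variable {u : ℕ → H}

lemma limsupDistSq_le_of_eventually_le {y : H} {b : ℝ}
    (h : ∀ᶠ n in atTop, dist y (u n) ^ 2 ≤ b) : limsupDistSq u y ≤ b :=
  limsup_le_of_le (isCoboundedUnder_le_of_le atTop fun _ => sq_nonneg _) h

lemma exists_dist_le_of_isBounded_range (hu : Bornology.IsBounded (Set.range u)) (y : H) :
    ∃ K, ∀ n, dist y (u n) ≤ K := by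
  obtain ⟨K, hK⟩ := hu.subset_closedBall y
  exact ⟨K, fun n => by simpa [dist_comm] using hK ⟨n, rfl⟩⟩

lemma isBoundedUnder_dist_sq (hu : Bornology.IsBounded (Set.range u)) (y : H) :
    IsBoundedUnder (· ≤ ·) atTop fun n => dist y (u n) ^ 2 := by
  obtain ⟨K, hK⟩ := exists_dist_le_of_isBounded_range hu y
  exact isBoundedUnder_of ⟨K ^ 2, fun n => pow_le_pow_left₀ dist_nonneg (hK n) 2⟩

lemma limsupDistSq_nonneg (hu : Bornology.IsBounded (Set.range u)) (y : H) :
    0 ≤ limsupDistSq u y :=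
  le_limsup_of_frequently_le (.of_forall fun _ => sq_nonneg _) (isBoundedUnder_dist_sq hu y)

lemma eventually_dist_sq_lt_limsupDistSq_add (hu : Bornology.IsBounded (Set.range u)) (y : H)
    {ε : ℝ} (hε : 0 < ε) : ∀ᶠ n in atTop, dist y (u n) ^ 2 < limsupDistSq u y + ε :=
  eventually_lt_of_limsup_lt (lt_add_of_pos_right _ hε) (isBoundedUnder_dist_sq hu y)

lemma limsupDistSq_le_add_of_eventually_le (hu : Bornology.IsBounded (Set.range u)) {y z : H}
    {b : ℝ} (h : ∀ᶠ n in atTop, dist y (u n) ^ 2 ≤ dist z (u n) ^ 2 + b) :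
    limsupDistSq u y ≤ limsupDistSq u z + b := by
  refine le_of_forall_pos_le_add fun ε hε => limsupDistSq_le_of_eventually_le ?_
  filter_upwards [h, eventually_dist_sq_lt_limsupDistSq_add hu z hε] with n hyz hz
  linarith

lemma lowerSemicontinuous_limsupDistSq (hu : Bornology.IsBounded (Set.range u)) :
    LowerSemicontinuous (limsupDistSq u) := by
  intro c a ha
  obtain ⟨K, hK⟩ := exists_dist_le_of_isBounded_range hu c
  have hminorant : ∀ y, limsupDistSq u c - 2 * K * dist y c ≤ limsupDistSq u y := fun y =>
    sub_le_iff_le_add.2 <| limsupDistSq_le_add_of_eventually_le hu <| .of_forall fun n => by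
      have htri : dist c (u n) ≤ dist y c + dist y (u n) := dist_triangle_left _ _ _
      nlinarith [sq_nonneg (dist c (u n) - dist y (u n)),
        mul_le_mul_of_nonneg_left htri (dist_nonneg (x := c) (y := u n)),
        mul_le_mul_of_nonneg_right (hK n) (dist_nonneg (x := y) (y := c))]
  have hlim : Tendsto (fun y => limsupDistSq u c - 2 * K * dist y c) (𝓝 c)
      (𝓝 (limsupDistSq u c)) :=
    Continuous.tendsto' (by fun_prop) _ _ (by simp)
  exact (hlim.eventually_const_lt ha).mono fun y hy => hy.trans_le (hminorant y)

end AsymptoticCenter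

section Hadamard

variable {H : Type*} [MetricSpace H] [CompleteSpace H] {u : ℕ → H}

lemma HadamardSpace.stronglyConvexWith_dist_sq (hH : HadamardSpace H) (x : H) :
    StronglyConvexWith 1 (fun y => ((dist x y ^ 2 : ℝ) : EReal)) :=
  stronglyConvexWith_coe_iff.2 fun γ hγ t ht => by simpa using hH.cat0 x γ hγ t ht

lemma HadamardSpace.stronglyConvexWith_limsupDistSq (hH : HadamardSpace H)
    (hu : Bornology.IsBounded (Set.range u)) :
    StronglyConvexWith 1 (fun y => (limsupDistSq u y : EReal)) := by
  refine stronglyConvexWith_coe_iff.2 fun γ hγ t ht => le_of_forall_pos_le_add fun ε hε =>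
    limsupDistSq_le_of_eventually_le ?_
  filter_upwards [eventually_dist_sq_lt_limsupDistSq_add hu (γ 0) hε,
    eventually_dist_sq_lt_limsupDistSq_add hu (γ 1) hε] with n h0 h1
  have hcat := hH.cat0 (u n) γ hγ t ht
  simp only [dist_comm (u n)] at hcat
  linarith [mul_le_mul_of_nonneg_left h0.le (sub_nonneg.2 ht.2),
    mul_le_mul_of_nonneg_left h1.le ht.1]

lemma HadamardSpace.exists_projection (hH : HadamardSpace H) {C : Set H} (hC : GeodesicConvex C)
    (hclosed : IsClosed C) (hne : C.Nonempty) (c : H) :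
    ∃ p ∈ C, ∀ z ∈ C, dist c p ^ 2 + dist p z ^ 2 ≤ dist c z ^ 2 := by
  have hconv := hH.stronglyConvexWith_dist_sq c
  obtain ⟨p, hp, hmin⟩ := hconv.exists_isMinOn hH.geodesic one_pos hC hclosed hne
    (Continuous.lowerSemicontinuous (by fun_prop) |>.lowerSemicontinuousOn C)
    ⟨0, Set.forall_mem_image.2 fun _ _ => sq_nonneg _⟩
  exact ⟨p, hp, fun z hz => by
    simpa using hconv.coe_add_dist_sq_le_of_isMinOn hH.geodesic hC hp hmin hz⟩

lemma HadamardSpace.exists_isAsymptoticCenter (hH : HadamardSpace H)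
    (hu : Bornology.IsBounded (Set.range u)) : ∃ c, IsAsymptoticCenter u c := by
  obtain ⟨c, -, hc⟩ := (hH.stronglyConvexWith_limsupDistSq hu).exists_isMinOn hH.geodesic one_pos
    (fun _ _ _ _ _ _ => Set.mem_univ _) isClosed_univ ⟨u 0, Set.mem_univ _⟩
    ((lowerSemicontinuous_limsupDistSq hu).lowerSemicontinuousOn _)
    ⟨0, Set.forall_mem_image.2 fun y _ => limsupDistSq_nonneg hu y⟩
  exact ⟨c, fun y => hc (Set.mem_univ y)⟩

lemma IsAsymptoticCenter.mem_of_eventually_mem (hH : HadamardSpace H)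
    (hu : Bornology.IsBounded (Set.range u)) {c : H} (hc : IsAsymptoticCenter u c) {C : Set H}
    (hC : GeodesicConvex C) (hclosed : IsClosed C) (huC : ∀ᶠ n in atTop, u n ∈ C) : c ∈ C := by
  obtain ⟨n, hn⟩ := huC.exists
  obtain ⟨p, hp, hproj⟩ := hH.exists_projection hC hclosed ⟨_, hn⟩ c
  have hdecrease : limsupDistSq u p ≤ limsupDistSq u c + -dist c p ^ 2 := by
    refine limsupDistSq_le_add_of_eventually_le hu (huC.mono fun n hn => ?_)
    linarith [hproj _ hn]
  have hcenter : limsupDistSq u c ≤ limsupDistSq u p := hc p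
  have hcp : dist c p ^ 2 ≤ 0 := by linarith
  rwa [dist_eq_zero.1 (pow_eq_zero_iff two_ne_zero |>.1 (hcp.antisymm (sq_nonneg _)))]

lemma IsAsymptoticCenter.apply_le_limsup (hH : HadamardSpace H) {f : H → EReal}
    (hconv : ConvexFun f) (hlsc : LowerSemicontinuous f) (hu : Bornology.IsBounded (Set.range u))
    {c : H} (hc : IsAsymptoticCenter u c) : f c ≤ limsup (fun n => f (u n)) atTop :=
  EReal.le_of_forall_lt_iff_le.1 fun a ha =>
    hc.mem_of_eventually_mem hH hu (hconv.geodesicConvex_sublevel a) (hlsc.isClosed_preimage a)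
      ((eventually_lt_of_limsup_lt ha).mono fun _ hn => hn.le)

end Hadamard

section FejerMonotone

variable {H : Type*} [MetricSpace H]

/-- A sequence is Fejér monotone with respect to `M` if it never moves away from a point of `M`. -/
def IsFejerMonotone (x : ℕ → H) (M : Set H) : Prop :=
  ∀ y ∈ M, Antitone fun n => dist y (x n)

variable {x : ℕ → H} {M : Set H}

lemma IsFejerMonotone.isBounded_range (hx : IsFejerMonotone x M) (hM : M.Nonempty) :
    Bornology.IsBounded (Set.range x) := by
  obtain ⟨y, hy⟩ := hM
  refine (Metric.isBounded_closedBall (x := y) (r := dist y (x 0))).subset ?_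
  rintro _ ⟨n, rfl⟩
  exact Metric.mem_closedBall'.2 (hx y hy n.zero_le)

lemma IsFejerMonotone.limsupDistSq_comp (hx : IsFejerMonotone x M) {y : H} (hy : y ∈ M)
    {φ : ℕ → ℕ} (hφ : Tendsto φ atTop atTop) : limsupDistSq (x ∘ φ) y = limsupDistSq x y := by
  have hlim : Tendsto (fun n => dist y (x n) ^ 2) atTop (𝓝 ((⨅ n, dist y (x n)) ^ 2)) :=
    (tendsto_atTop_ciInf (hx y hy) ⟨0, Set.forall_mem_range.2 fun _ => dist_nonneg⟩).pow 2
  exact (hlim.comp hφ).limsup_eq.trans hlim.limsup_eq.symm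

lemma IsFejerMonotone.exists_weakConvSeq [CompleteSpace H] (hH : HadamardSpace H)
    (hx : IsFejerMonotone x M) (hM : M.Nonempty)
    (hcenter : ∀ φ : ℕ → ℕ, StrictMono φ → ∀ c, IsAsymptoticCenter (x ∘ φ) c → c ∈ M) :
    ∃ m ∈ M, WeakConvSeq x m := by
  have hbdd := hx.isBounded_range hM
  obtain ⟨m, hm⟩ := hH.exists_isAsymptoticCenter hbdd
  have hmM : m ∈ M := hcenter id strictMono_id m hm
  refine ⟨m, hmM, fun φ hφ y => ?_⟩
  obtain ⟨c, hc⟩ := hH.exists_isAsymptoticCenter (hbdd.subset (Set.range_comp_subset_range φ x))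
  have hcM : c ∈ M := hcenter φ hφ c hc
  calc limsupDistSq (x ∘ φ) m
      = limsupDistSq x m := hx.limsupDistSq_comp hmM hφ.tendsto_atTop
    _ ≤ limsupDistSq x c := hm c
    _ = limsupDistSq (x ∘ φ) c := (hx.limsupDistSq_comp hcM hφ.tendsto_atTop).symm
    _ ≤ limsupDistSq (x ∘ φ) y := hc y

end FejerMonotone

section ProximalPoint

variable {H : Type*} [MetricSpace H] {f : H → EReal}

lemma IsResolventPt.apply_le {l : ℝ} (hl : 0 < l) {x p : H} (hp : IsResolventPt f l x p) :
    f p ≤ f x := by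
  have hnonneg : (0 : EReal) ≤ ((dist x p ^ 2 / (2 * l) : ℝ) : EReal) :=
    EReal.coe_nonneg.2 (by positivity)
  simpa using (le_add_of_nonneg_right hnonneg).trans (hp x)

lemma IsResolventPt.add_dist_sq_le [CompleteSpace H] (hH : HadamardSpace H) (hconv : ConvexFun f)
    {l : ℝ} (hl : 0 < l) {x p : H} (hp : IsResolventPt f l x p) (y : H) :
    f p + ((dist x p ^ 2 / (2 * l) : ℝ) : EReal) + ((dist p y ^ 2 / (2 * l) : ℝ) : EReal) ≤
      f y + ((dist x y ^ 2 / (2 * l) : ℝ) : EReal) := by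
  have hobjective := hconv.add_stronglyConvexWith
    ((hH.stronglyConvexWith_dist_sq x).const_mul (c := (2 * l)⁻¹) (by positivity))
  simp only [mul_one, inv_mul_eq_div] at hobjective
  simpa only [inv_mul_eq_div] using hobjective.add_dist_sq_le_of_isMinOn hH.geodesic
    (fun _ _ _ _ _ _ => Set.mem_univ _) (Set.mem_univ p) (isMinOn_univ_iff.2 hp) (Set.mem_univ y)

lemma IsResolventPt.two_mul_sub_add_dist_sq_le [CompleteSpace H] (hH : HadamardSpace H)
    (hconv : ConvexFun f) {l : ℝ} (hl : 0 < l) {x p y : H} (hp : IsResolventPt f l x p) {b v : ℝ}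
    (hb : b ≤ f p) (hv : f y ≤ v) :
    2 * l * (b - v) + dist y p ^ 2 ≤ dist y x ^ 2 := by
  have h := (add_le_add (add_le_add hb le_rfl) le_rfl).trans
    ((hp.add_dist_sq_le hH hconv hl y).trans (add_le_add hv le_rfl))
  norm_cast at h
  rw [dist_comm y p, dist_comm y x]
  field_simp at h
  linarith [sq_nonneg (dist x p)]

/-- The sequence `x` is generated by the proximal point algorithm for `f` with steps `lam`, the
`n`-th step leading from `x n` to `x (n + 1)`. -/
def IsProximalSeq (f : H → EReal) (lam : ℕ → ℝ) (x : ℕ → H) : Prop :=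
  ∀ n, IsResolventPt f (lam n) (x n) (x (n + 1))

variable {lam : ℕ → ℝ} {x : ℕ → H}

lemma IsProximalSeq.antitone_apply (hx : IsProximalSeq f lam x) (hpos : ∀ n, 0 < lam n) :
    Antitone fun n => f (x n) :=
  antitone_nat_of_succ_le fun n => (hx n).apply_le (hpos n)

variable [CompleteSpace H]

lemma IsProximalSeq.isFejerMonotone (hx : IsProximalSeq f lam x) (hH : HadamardSpace H)
    (hconv : ConvexFun f) (hpos : ∀ n, 0 < lam n) {v : ℝ} (hv : ∀ n, v ≤ f (x (n + 1))) :
    IsFejerMonotone x {y | f y ≤ v} := fun y hy =>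
  antitone_nat_of_succ_le fun n => le_of_sq_le_sq
    (by simpa using (hx n).two_mul_sub_add_dist_sq_le hH hconv (hpos n) (hv n) hy) dist_nonneg

lemma IsProximalSeq.two_mul_sum_mul_sub_le (hx : IsProximalSeq f lam x) (hH : HadamardSpace H)
    (hconv : ConvexFun f) (hpos : ∀ n, 0 < lam n) {y : H} {b v : ℝ} (hv : f y ≤ v) {N : ℕ}
    (hb : b ≤ f (x N)) :
    2 * (∑ n ∈ Finset.range N, lam n) * (b - v) ≤ dist y (x 0) ^ 2 := by
  calc 2 * (∑ n ∈ Finset.range N, lam n) * (b - v)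
      = ∑ n ∈ Finset.range N, 2 * lam n * (b - v) := by rw [Finset.mul_sum, Finset.sum_mul]
    _ ≤ ∑ n ∈ Finset.range N, (dist y (x n) ^ 2 - dist y (x (n + 1)) ^ 2) :=
        Finset.sum_le_sum fun n hn => le_sub_iff_add_le.2 <|
          (hx n).two_mul_sub_add_dist_sq_le hH hconv (hpos n)
            (hb.trans (hx.antitone_apply hpos (Finset.mem_range.1 hn))) hv
    _ = dist y (x 0) ^ 2 - dist y (x N) ^ 2 :=
        Finset.sum_range_sub' (fun n => dist y (x n) ^ 2) N
    _ ≤ dist y (x 0) ^ 2 := sub_le_self _ (sq_nonneg _)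

lemma IsProximalSeq.eventually_apply_lt (hx : IsProximalSeq f lam x) (hH : HadamardSpace H)
    (hconv : ConvexFun f) (hpos : ∀ n, 0 < lam n)
    (hdiv : Tendsto (fun N => ∑ n ∈ Finset.range N, lam n) atTop atTop) {y : H} {b : EReal}
    (hb : f y < b) : ∀ᶠ n in atTop, f (x n) < b := by
  obtain ⟨v, hyv, hvb⟩ := EReal.lt_iff_exists_real_btwn.1 hb
  obtain ⟨b', hvb', hb'⟩ := EReal.lt_iff_exists_real_btwn.1 hvb
  have hgap : 0 < b' - v := sub_pos.2 (EReal.coe_lt_coe_iff.1 hvb')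
  filter_upwards [hdiv.eventually_gt_atTop (dist y (x 0) ^ 2 / (2 * (b' - v)))] with N hN
  refine lt_of_not_ge fun hle => ?_
  have hsum := hx.two_mul_sum_mul_sub_le hH hconv hpos hyv.le (hb'.le.trans hle)
  rw [div_lt_iff₀ (by positivity)] at hN
  linarith

lemma IsProximalSeq.tendsto_apply_iInf (hx : IsProximalSeq f lam x) (hH : HadamardSpace H)
    (hconv : ConvexFun f) (hpos : ∀ n, 0 < lam n)
    (hdiv : Tendsto (fun N => ∑ n ∈ Finset.range N, lam n) atTop atTop) :
    Tendsto (fun n => f (x n)) atTop (𝓝 (⨅ y, f y)) := by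
  refine tendsto_order.2 ⟨fun a ha => .of_forall fun n => ha.trans_le (iInf_le f _), fun b hb => ?_⟩
  obtain ⟨y, hy⟩ := iInf_lt_iff.1 hb
  exact hx.eventually_apply_lt hH hconv hpos hdiv hy

lemma IsProximalSeq.apply_le_of_isAsymptoticCenter (hx : IsProximalSeq f lam x)
    (hH : HadamardSpace H) (hconv : ConvexFun f) (hlsc : LowerSemicontinuous f)
    (hpos : ∀ n, 0 < lam n) (hdiv : Tendsto (fun N => ∑ n ∈ Finset.range N, lam n) atTop atTop)
    (hbdd : Bornology.IsBounded (Set.range x)) {φ : ℕ → ℕ} (hφ : Tendsto φ atTop atTop) {c : H}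
    (hc : IsAsymptoticCenter (x ∘ φ) c) (y : H) : f c ≤ f y :=
  calc f c ≤ limsup (fun n => f ((x ∘ φ) n)) atTop :=
        hc.apply_le_limsup hH hconv hlsc (hbdd.subset (Set.range_comp_subset_range φ x))
    _ = ⨅ z, f z := ((hx.tendsto_apply_iInf hH hconv hpos hdiv).comp hφ).limsup_eq
    _ ≤ f y := iInf_le f y

end ProximalPoint

/-- (Weak convergence of the proximal point algorithm.) If a proper convex
lsc function on a Hadamard space attains its minimum, the proximal point algorithm with
positive steps `λ_n` satisfying `∑ λ_n = ∞` weakly converges to a minimizer of `f`. -/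
theorem proximal_point_algorithm_weak_convergence
    {H : Type*} [MetricSpace H] [CompleteSpace H] (hH : HadamardSpace H)
    (f : H → EReal) (hf : ProperConvexLsc f)
    (hmin : ∃ m : H, ∀ y : H, f m ≤ f y)
    (x₀ : H) (lam : ℕ → ℝ) (hpos : ∀ n, 0 < lam n)
    (hdiv : Tendsto (fun N => ∑ n ∈ Finset.range N, lam n) atTop atTop)
    (x : ℕ → H) (hx0 : x 0 = x₀)
    (hx : ∀ n : ℕ, IsResolventPt f (lam n) (x n) (x (n + 1))) :
    ∃ m : H, (∀ y : H, f m ≤ f y) ∧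
      Bornology.IsBounded (Set.range x) ∧ WeakConvSeq x m := by
  obtain ⟨⟨z, hz⟩, hbot, hconv, hlsc⟩ := hf
  obtain ⟨m₀, hm₀⟩ := hmin
  have hprox : IsProximalSeq f lam x := hx
  lift f m₀ to ℝ using ⟨ne_top_of_le_ne_top hz (hm₀ z), hbot m₀⟩ with v hv
  have hfejer := hprox.isFejerMonotone hH hconv hpos fun n => hm₀ (x (n + 1))
  have hne : {y | f y ≤ v}.Nonempty := ⟨m₀, hv.ge⟩
  have hbdd := hfejer.isBounded_range hne
  obtain ⟨m, hm, hweak⟩ := hfejer.exists_weakConvSeq hH hne fun φ hφ c hc =>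
    (hprox.apply_le_of_isAsymptoticCenter hH hconv hlsc hpos hdiv hbdd hφ.tendsto_atTop hc
      m₀).trans hv.ge
  exact ⟨m, fun y => hm.trans (hm₀ y), hbdd, hweak⟩
end
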